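/- arXiv:2006.00905 — 3 statements merged into one kernel-verified Lean document; each statement's English description precedes it below -/
import Mathlib

section
/- Let d ≥ 1 be an integer, let y be a permutation of I_d = {1,…,d}, and let ε : Î_d → {±1} be an odd sign function (ε(−i) = −ε(i) for all i). Define 𝐲 : Î_d → Î_d by 𝐲(i) = ε(i) · y^{ε(i)}(i) · ε(y^{ε(i)}(i)), where y is extended oddly to Î_d. Then 𝐲(−𝐲(i)) = −i for every i ∈ Î_d, and consequently 𝐲 is a bijection of Î_d. -/
/-- `Î_d`: the set of integers `i` with `1 ≤ |i| ≤ d`. -/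
def IdxHat (d : ℤ) : Set ℤ := {i : ℤ | 1 ≤ |i| ∧ |i| ≤ d}

/-- `y^s(i)` for positive `i`: `y i` if `s = 1`, `y⁻¹ i` if `s = -1`. -/
def pApp (y : Equiv.Perm ℤ) (s i : ℤ) : ℤ := if s = 1 then y i else y.symm i

/-- The odd extension of `y^s` to `Î_d`. -/
def sApp (y : Equiv.Perm ℤ) (s i : ℤ) : ℤ :=
  if 0 < i then pApp y s i else -pApp y s (-i)

/-- `𝐲(i) = ε(i) · y^{ε(i)}(i) · ε(y^{ε(i)}(i))`. -/
def bY (y : Equiv.Perm ℤ) (ε : ℤ → ℤ) (i : ℤ) : ℤ :=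
  ε i * sApp y (ε i) i * ε (sApp y (ε i) i)

theorem idx_neg {d i : ℤ} (h : i ∈ IdxHat d) : -i ∈ IdxHat d := by
  simpa [IdxHat] using h

theorem sApp_neg (y : Equiv.Perm ℤ) (s i : ℤ) (h : i ≠ 0) :
    sApp y s (-i) = -sApp y s i := by
  unfold sApp
  rcases lt_or_gt_of_ne h with h | h
  · rw [if_pos (by omega), if_neg (by omega)]; simp
  · rw [if_neg (by omega), if_pos (by omega)]; simp

theorem pApp_spec (d : ℤ) (y : Equiv.Perm ℤ)
    (hy : Set.BijOn y (Set.Icc 1 d) (Set.Icc 1 d)) (s i : ℤ) (hs : s = 1 ∨ s = -1)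
    (hi : i ∈ Set.Icc 1 d) :
    pApp y s i ∈ Set.Icc 1 d ∧ pApp y (-s) (pApp y s i) = i := by
  rcases hs with rfl | rfl
  · exact ⟨by simpa [pApp] using hy.mapsTo hi, by simp [pApp]⟩
  · refine ⟨?_, by simp [pApp]⟩
    obtain ⟨j, hj, rfl⟩ := hy.surjOn hi
    simpa [pApp] using hj

theorem sApp_spec (d : ℤ) (y : Equiv.Perm ℤ)
    (hy : Set.BijOn y (Set.Icc 1 d) (Set.Icc 1 d)) (s i : ℤ) (hs : s = 1 ∨ s = -1)
    (hi : i ∈ IdxHat d) :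
    sApp y s i ∈ IdxHat d ∧ sApp y (-s) (sApp y s i) = i := by
  have key : ∀ i : ℤ, i ∈ Set.Icc 1 d →
      sApp y s i ∈ IdxHat d ∧ sApp y (-s) (sApp y s i) = i := by
    intro i hi
    obtain ⟨h1, h2⟩ := pApp_spec d y hy s i hs hi
    have e : sApp y s i = pApp y s i := if_pos (by have := hi.1; omega)
    have e2 : sApp y (-s) (pApp y s i) = pApp y (-s) (pApp y s i) :=
      if_pos (by have := h1.1; omega)
    rw [e, e2]
    refine ⟨?_, h2⟩
    have := h1.1
    have := h1.2
    simp only [IdxHat, Set.mem_setOf_eq]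
    rw [abs_of_pos (by omega)]
    exact h1
  obtain ⟨ha, hb⟩ := hi
  rcases lt_or_ge 0 i with h | h
  · rw [abs_of_pos h] at ha hb
    exact key i ⟨ha, hb⟩
  · rw [abs_of_nonpos h] at ha hb
    obtain ⟨h1, h2⟩ := key (-i) ⟨ha, hb⟩
    have hne : sApp y s (-i) ≠ 0 := by
      intro h0
      rw [h0] at h1
      simp [IdxHat] at h1
    have e : sApp y s i = -sApp y s (-i) := by
      rw [sApp_neg y s i (by omega)]; simp
    rw [e, sApp_neg _ _ _ hne, h2]
    exact ⟨idx_neg h1, by simp⟩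

theorem stmt3 (d : ℤ) (hd : 1 ≤ d) (y : Equiv.Perm ℤ)
    (hy : Set.BijOn y (Set.Icc 1 d) (Set.Icc 1 d))
    (ε : ℤ → ℤ) (hεodd : ∀ i : ℤ, ε (-i) = -ε i)
    (hε : ∀ i ∈ IdxHat d, ε i = 1 ∨ ε i = -1) :
    (∀ i ∈ IdxHat d, bY y ε (-(bY y ε i)) = -i)
    ∧ Set.BijOn (bY y ε) (IdxHat d) (IdxHat d) := by
  have main : ∀ i ∈ IdxHat d, bY y ε i ∈ IdxHat d ∧ bY y ε (-(bY y ε i)) = -i := by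
    intro i hi
    obtain ⟨hj, hji⟩ := sApp_spec d y hy (ε i) i (hε i hi) hi
    have hj0 : sApp y (ε i) i ≠ 0 := by
      intro h0
      rw [h0] at hj
      simp [IdxHat] at hj
    have ej := hε _ hj
    have hbY : bY y ε i = ε i * sApp y (ε i) i * ε (sApp y (ε i) i) := rfl
    generalize sApp y (ε i) i = j at *
    have hn := idx_neg hj
    rcases hε i hi with h | h <;> rcases ej with h' | h' <;>
      simp only [h, h', one_mul, mul_one, neg_mul, mul_neg, neg_neg] at hbY hji <;>
      rw [hbY] <;> refine ⟨by assumption, ?_⟩ <;>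
      simp [bY, hεodd, h, h', hji, sApp_neg _ _ _ hj0]
  refine ⟨fun i hi => (main i hi).2, fun i hi => (main i hi).1, ?_, ?_⟩
  · intro a ha b hb hab
    have h1 := (main a ha).2
    have h2 := (main b hb).2
    rw [hab] at h1
    linarith
  · intro i hi
    refine ⟨_, idx_neg (main _ (idx_neg hi)).1, ?_⟩
    rw [(main _ (idx_neg hi)).2, neg_neg]
end

section
/- (Lemma on restoring an origami from its double.) Let d ≥ 1 and let 𝐘 be a permutation of Î_d. Suppose there exist n ≥ 1 and nonempty lists L_j = (a_{j,1}, …, a_{j,m_j}) of elements of Î_d for j = 1,…,n such that the 2n sets supp(L_1), −supp(L_1), …, supp(L_n), −supp(L_n) are pairwise disjoint and their union is all of Î_d, and such that 𝐘 is the product of the disjoint cycles c_j = (a_{j,1} a_{j,2} … a_{j,m_j}) and c_j' = (−a_{j,1} −a_{j,2} … −a_{j,m_j})^{−1} for j = 1,…,n (i.e. 𝐘(a_{j,k}) = a_{j,k+1} and 𝐘(−a_{j,k+1}) = −a_{j,k} cyclically, and these cycles define 𝐘 on all of Î_d). Let y be the permutation of I_d that is the product of the disjoint cycles (|a_{j,1}|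 |a_{j,2}| … |a_{j,m_j}|) for j = 1,…,n, and define ε : I_d → {±1} by ε(i) = 1 if i appears in some list L_j and ε(i) = −1 if −i appears in some list L_j, extended oddly to Î_d. Then for every i ∈ Î_d, 𝐘(i) = ε(i) · y^{ε(i)}(i) · ε(y^{ε(i)}(i)), where y is extended oddly to Î_d. -/
/-- Lemma on restoring an origami from its double.  The permutation `Y` of `Î_d` is the
product of the disjoint cycles `c_j = (a_{j,1} … a_{j,m_j})` and
`c_j' = (-a_{j,1} … -a_{j,m_j})⁻¹`, where the lists `L j = (a_{j,1}, …, a_{j,m_j})`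
have pairwise disjoint supports `supp(L j)`, `-supp(L j)` whose union is `Î_d`.
If `y` is the product of the cycles `(|a_{j,1}| … |a_{j,m_j}|)` and `ε` is the odd sign
function with `ε = 1` on the entries of the lists, then `Y = 𝐲` on `Î_d`. -/
theorem stmt4 (d : ℤ) (hd : 1 ≤ d)
    (Y : Equiv.Perm ℤ) (hY : Set.BijOn Y (IdxHat d) (IdxHat d))
    (n : ℕ) (hn : 1 ≤ n) (L : Fin n → List ℤ)
    (hne : ∀ j, L j ≠ [])
    (hmem : ∀ j, ∀ a ∈ L j, a ∈ IdxHat d)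
    (hnodup : ∀ j, (L j).Nodup)
    (hdisj₁ : ∀ j k : Fin n, ∀ a : ℤ, a ∈ L j → a ∈ L k → j = k)
    (hdisj₂ : ∀ j k : Fin n, ∀ a : ℤ, a ∈ L j → -a ∉ L k)
    (hcover : ∀ i ∈ IdxHat d, ∃ j, i ∈ L j ∨ -i ∈ L j)
    (hYcyc : ∀ j : Fin n, ∀ k : ℕ, k < (L j).length →
      Y ((L j).getD k 0) = (L j).getD ((k + 1) % (L j).length) 0
      ∧ Y (-((L j).getD ((k + 1) % (L j).length) 0)) = -((L j).getD k 0))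
    (y : Equiv.Perm ℤ) (hy : Set.BijOn y (Set.Icc 1 d) (Set.Icc 1 d))
    (hycyc : ∀ j : Fin n, ∀ k : ℕ, k < (L j).length →
      y (|(L j).getD k 0|) = |(L j).getD ((k + 1) % (L j).length) 0|)
    (ε : ℤ → ℤ) (hεodd : ∀ i : ℤ, ε (-i) = -ε i)
    (hε : ∀ j : Fin n, ∀ a ∈ L j, ε a = 1) :
    ∀ i ∈ IdxHat d, Y i = bY y ε i := by
  have key : ∀ x b : ℤ, |x| = |b| → ε b = 1 → x * ε x = b := by
    intro x b h hb
    rcases abs_eq_abs.mp h with h | h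
    · rw [h, hb]; ring
    · rw [h, hεodd, hb]; ring
  have getm : ∀ j : Fin n, ∀ k : ℕ, k < (L j).length → (L j).getD k 0 ∈ L j := by
    intro j k hk
    rw [List.getD_eq_getElem _ _ hk]
    exact List.getElem_mem hk
  have habs : ∀ s a c : ℤ, pApp y s |a| = |c| → |sApp y s a| = |c| := by
    intro s a c h
    unfold sApp
    split_ifs with ha
    · rw [abs_of_pos ha] at h
      rw [h, abs_abs]
    · rw [abs_of_nonpos (not_lt.mp ha)] at h
      rw [h, abs_neg, abs_abs]
  intro i hi
  obtain ⟨j, hj | hj⟩ := hcover i hi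
  · obtain ⟨k, hk, rfl⟩ := List.getElem_of_mem hj
    have hpos : 0 < (L j).length := by omega
    have h1 := (hYcyc j k hk).1
    have h2 := hycyc j k hk
    have hb := hε j _ (getm j _ (Nat.mod_lt (k + 1) hpos))
    have ha := hε j _ hj
    rw [List.getD_eq_getElem _ _ hk] at h1 h2
    rw [h1]
    unfold bY
    rw [ha, one_mul]
    refine (key _ _ (habs _ _ _ ?_) hb).symm
    simpa [pApp] using h2
  · obtain ⟨k', hk', hki⟩ := List.getElem_of_mem hj
    have hpos : 0 < (L j).length := by omega
    obtain ⟨k, hk, hkk⟩ : ∃ k, k < (L j).length ∧ (k + 1) % (L j).length = k' := by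
      rcases Nat.eq_zero_or_pos k' with h | h
      · refine ⟨(L j).length - 1, by omega, ?_⟩
        rw [Nat.sub_add_cancel hpos, Nat.mod_self, h]
      · refine ⟨k' - 1, by omega, ?_⟩
        rw [Nat.sub_add_cancel h, Nat.mod_eq_of_lt hk']
    have h1 := (hYcyc j k hk).2
    have h2 := hycyc j k hk
    have ha := hε j _ (getm j k hk)
    have hb := hε j _ hj
    rw [hεodd] at hb
    have hεi : ε i = -1 := by omega
    rw [hkk, List.getD_eq_getElem _ _ hk', hki] at h1 h2
    rw [neg_neg] at h1
    rw [abs_neg] at h2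
    rw [h1]
    unfold bY
    rw [hεi, mul_assoc, key _ _ (habs (-1) i _ ?_) ha]
    · ring
    · simp [pApp, ← h2]
end

section
/- Let d ≥ 1 and for j = 1, 2 let y_j be a permutation of I_d and ε_j : Î_d → {±1} an odd sign function, with associated maps 𝐲_j : Î_d → Î_d given by 𝐲_j(i) = ε_j(i) · y_j^{ε_j(i)}(i) · ε_j(y_j^{ε_j(i)}(i)). Let σ be an odd bijection of Î_d, with σ̄(i) = |σ(i)| and δ_σ(i) = sign(σ(i)) for i ∈ I_d. Then σ(𝐲_1(i)) = 𝐲_2(σ(i)) holds for all i ∈ Î_d if and only if the following two conditions hold for all i ∈ I_d: (3) η(i) · η(y_2(i)) = 1, where η(i) := δ_σ(σ̄^{−1}(i)) · ε_1(σ̄^{−1}(i)) · ε_2(i); (4) y_2(σ̄(i)) = σ̄(y_1^{δ_σ(i) · ε_1(i) · ε_2(σ̄(i))}(i)). -/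
theorem pApp_mem (d : ℤ) (y : Equiv.Perm ℤ) (hy : Set.BijOn y (Set.Icc 1 d) (Set.Icc 1 d))
    (s i : ℤ) (hi : i ∈ Set.Icc (1:ℤ) d) : pApp y s i ∈ Set.Icc (1:ℤ) d := by
  unfold pApp
  split_ifs
  · exact hy.mapsTo hi
  · obtain ⟨j, hj, rfl⟩ := hy.surjOn hi
    simpa using hj

theorem mem_hat {d i : ℤ} (hi : i ∈ Set.Icc (1:ℤ) d) : i ∈ IdxHat d := by
  have h : 0 ≤ i := by have := hi.1; omega
  simp only [IdxHat, Set.mem_setOf_eq, abs_of_nonneg h]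
  exact hi

theorem abs_mem {d i : ℤ} (hi : i ∈ IdxHat d) : |i| ∈ Set.Icc (1:ℤ) d := hi

theorem pm_mul {a b : ℤ} (ha : a = 1 ∨ a = -1) (hb : b = 1 ∨ b = -1) :
    a * b = 1 ∨ a * b = -1 := by
  rcases ha with rfl | rfl <;> rcases hb with rfl | rfl <;> simp

theorem odd_mul (f : ℤ → ℤ) (hf : ∀ i, f (-i) = - f i) {t : ℤ} (ht : t = 1 ∨ t = -1) (i : ℤ) :
    f (t * i) = t * f i := by
  rcases ht with rfl | rfl <;> simp [hf]

theorem bY_eq (d : ℤ) (y : Equiv.Perm ℤ) (hy : Set.BijOn y (Set.Icc 1 d) (Set.Icc 1 d))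
    (ε : ℤ → ℤ) (hodd : ∀ i : ℤ, ε (-i) = -ε i) (hε : ∀ i ∈ IdxHat d, ε i = 1 ∨ ε i = -1)
    (t i : ℤ) (ht : t = 1 ∨ t = -1) (hi : i ∈ Set.Icc (1:ℤ) d) :
    bY y ε (t * ε i * i) = t * ε (pApp y t i) * pApp y t i := by
  have h0 : 0 < i := by have := hi.1; omega
  have h1 : ¬ i < 0 := by omega
  rcases ht with rfl | rfl <;> rcases hε i (mem_hat hi) with h | h <;>
    simp [bY, sApp, h, hodd, h0, h1, mul_comm]

theorem hat_cases (d : ℤ) (ε : ℤ → ℤ) (hε : ∀ i ∈ IdxHat d, ε i = 1 ∨ ε i = -1)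
    (k : ℤ) (hk : k ∈ IdxHat d) :
    ∃ i ∈ Set.Icc (1:ℤ) d, ∃ t : ℤ, (t = 1 ∨ t = -1) ∧ k = t * ε i * i := by
  refine ⟨|k|, hk, ?_⟩
  rcases hε _ (mem_hat (abs_mem hk)) with h | h <;> rcases abs_choice k with h' | h'
  · exact ⟨1, by simp, by rw [h]; omega⟩
  · exact ⟨-1, by simp, by rw [h]; omega⟩
  · exact ⟨-1, by simp, by rw [h]; omega⟩
  · exact ⟨1, by simp, by rw [h]; omega⟩

theorem pm_eq {a b m n : ℤ} (ha : a = 1 ∨ a = -1) (hb : b = 1 ∨ b = -1) (hm : 1 ≤ m)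
    (hn : 1 ≤ n) : a * m = b * n ↔ m = n ∧ a = b := by
  rcases ha with rfl | rfl <;> rcases hb with rfl | rfl <;> omega

theorem pm_self {a : ℤ} (ha : a = 1 ∨ a = -1) : a * a = 1 := by
  rcases ha with rfl | rfl <;> simp

theorem sign_pm {d i : ℤ} (hi : i ∈ IdxHat d) : Int.sign i = 1 ∨ Int.sign i = -1 := by
  have h : i ≠ 0 := by rintro rfl; simp [IdxHat] at hi
  rcases lt_or_gt_of_ne h with h | h
  · right; exact Int.sign_eq_neg_one_of_neg h
  · left; exact Int.sign_eq_one_of_pos h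

/-- `σ ∘ 𝐲₁ = 𝐲₂ ∘ σ` on `Î_d` iff conditions (3) and (4) hold on `I_d`.
Here `σ̄ i = |σ i|`, `δ_σ i = sign (σ i)`, `σbi` is the inverse of the permutation `σ̄`
of `I_d`, and `η i = δ_σ(σ̄⁻¹ i) · ε₁(σ̄⁻¹ i) · ε₂ i`. -/
theorem stmt8 (d : ℤ) (hd : 1 ≤ d)
    (y₁ y₂ : Equiv.Perm ℤ)
    (hy₁ : Set.BijOn y₁ (Set.Icc 1 d) (Set.Icc 1 d))
    (hy₂ : Set.BijOn y₂ (Set.Icc 1 d) (Set.Icc 1 d))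
    (ε₁ ε₂ : ℤ → ℤ)
    (hε₁odd : ∀ i : ℤ, ε₁ (-i) = -ε₁ i) (hε₁ : ∀ i ∈ IdxHat d, ε₁ i = 1 ∨ ε₁ i = -1)
    (hε₂odd : ∀ i : ℤ, ε₂ (-i) = -ε₂ i) (hε₂ : ∀ i ∈ IdxHat d, ε₂ i = 1 ∨ ε₂ i = -1)
    (σ : Equiv.Perm ℤ) (hσ : Set.BijOn σ (IdxHat d) (IdxHat d))
    (hσodd : ∀ i : ℤ, σ (-i) = -σ i)
    (σbi : ℤ → ℤ)
    (hσbi : ∀ i ∈ Set.Icc (1:ℤ) d, σbi (|σ i|) = i ∧ |σ (σbi i)| = i) :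
    (∀ i ∈ IdxHat d, σ (bY y₁ ε₁ i) = bY y₂ ε₂ (σ i))
    ↔ (∀ i ∈ Set.Icc (1:ℤ) d,
        (Int.sign (σ (σbi i)) * ε₁ (σbi i) * ε₂ i)
            * (Int.sign (σ (σbi (y₂ i))) * ε₁ (σbi (y₂ i)) * ε₂ (y₂ i)) = 1
        ∧ y₂ (|σ i|) = |σ (pApp y₁ (Int.sign (σ i) * ε₁ i * ε₂ (|σ i|)) i)|) := by
  have hS : ∀ i ∈ Set.Icc (1:ℤ) d, σ i ∈ IdxHat d := fun i hi => hσ.mapsTo (mem_hat hi)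
  have hA : ∀ i ∈ Set.Icc (1:ℤ) d, |σ i| ∈ Set.Icc (1:ℤ) d := fun i hi => abs_mem (hS i hi)
  have hinj : ∀ i ∈ Set.Icc (1:ℤ) d, ∀ j ∈ Set.Icc (1:ℤ) d, |σ i| = |σ j| → i = j := by
    intro i hi j hj h
    rw [← (hσbi i hi).1, h, (hσbi j hj).1]
  have hB : ∀ i ∈ Set.Icc (1:ℤ) d, σbi i ∈ Set.Icc (1:ℤ) d := by
    intro i hi
    obtain ⟨k, hk, hki⟩ := hσ.surjOn (mem_hat hi)
    have h0 : |i| = i := abs_of_nonneg (by have := hi.1; omega)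
    have h1 : |σ (|k|)| = i := by
      rcases abs_choice k with h | h <;> rw [h] <;> simp [hσodd, hki, h0]
    rw [← h1, (hσbi _ (abs_mem hk)).1]
    exact abs_mem hk
  obtain ⟨e, he⟩ : ∃ e : ℤ → ℤ, ∀ i, e i = Int.sign (σ i) * ε₁ i * ε₂ (|σ i|) := ⟨_, fun _ => rfl⟩
  have hepm : ∀ i ∈ Set.Icc (1:ℤ) d, e i = 1 ∨ e i = -1 := by
    intro i hi
    rw [he]
    exact pm_mul (pm_mul (sign_pm (hS i hi)) (hε₁ i (mem_hat hi))) (hε₂ _ (mem_hat (hA i hi)))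
  have key : (∀ i ∈ IdxHat d, σ (bY y₁ ε₁ i) = bY y₂ ε₂ (σ i)) ↔
      ∀ i ∈ Set.Icc (1:ℤ) d, ∀ t : ℤ, (t = 1 ∨ t = -1) →
        (|σ (pApp y₁ t i)| = pApp y₂ (t * e i) (|σ i|) ∧ e (pApp y₁ t i) = e i) := by
    have main : ∀ i ∈ Set.Icc (1:ℤ) d, ∀ t : ℤ, (t = 1 ∨ t = -1) →
        (σ (bY y₁ ε₁ (t * ε₁ i * i)) = bY y₂ ε₂ (σ (t * ε₁ i * i)) ↔
        (|σ (pApp y₁ t i)| = pApp y₂ (t * e i) (|σ i|) ∧ e (pApp y₁ t i) = e i)) := by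
      intro i hi t ht
      have hP := pApp_mem d y₁ hy₁ t i hi
      have hQ := pApp_mem d y₂ hy₂ (t * e i) _ (hA i hi)
      have e1 := hε₁ i (mem_hat hi)
      have e2 := hε₂ _ (mem_hat (hA i hi))
      have eP := hε₁ _ (mem_hat hP)
      have eQ := hε₂ _ (mem_hat hQ)
      have eP2 := hε₂ _ (mem_hat (hA _ hP))
      have sP := sign_pm (hS _ hP)
      rw [bY_eq d y₁ hy₁ ε₁ hε₁odd hε₁ t i ht hi, odd_mul σ hσodd (pm_mul ht e1),
        odd_mul σ hσodd (pm_mul ht eP)]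
      have h1 : t * ε₁ i * σ i = (t * e i) * ε₂ (|σ i|) * |σ i| := by
        rw [he]
        conv_lhs => rw [← Int.sign_mul_abs (σ i)]
        linear_combination (-t * ε₁ i * (σ i).sign * |σ i|) * pm_self e2
      rw [h1, bY_eq d y₂ hy₂ ε₂ hε₂odd hε₂ _ _ (pm_mul ht (hepm i hi)) (hA i hi)]
      have h2 : t * ε₁ (pApp y₁ t i) * σ (pApp y₁ t i) =
          (t * ε₁ (pApp y₁ t i) * (σ (pApp y₁ t i)).sign) * |σ (pApp y₁ t i)| := by
        conv_lhs => rw [← Int.sign_mul_abs (σ (pApp y₁ t i))]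
        ring
      rw [h2, pm_eq (pm_mul (pm_mul ht eP) sP) (pm_mul (pm_mul ht (hepm i hi)) eQ)
        (hA _ hP).1 hQ.1]
      refine and_congr_right fun h => ?_
      rw [← h, he (pApp y₁ t i)]
      constructor
      · intro h3
        linear_combination t * ε₂ (|σ (pApp y₁ t i)|) * h3 + (e i * ε₂ (|σ (pApp y₁ t i)|) * ε₂ (|σ (pApp y₁ t i)|) - ε₁ (pApp y₁ t i) * (σ (pApp y₁ t i)).sign * ε₂ (|σ (pApp y₁ t i)|)) * pm_self ht + e i * pm_self eP2
      · intro h3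
        rw [← h3]
        linear_combination (-t * ε₁ (pApp y₁ t i) * (σ (pApp y₁ t i)).sign) * pm_self eP2
    constructor
    · intro h i hi t ht
      refine (main i hi t ht).1 (h _ ?_)
      have := mem_hat hi
      rcases pm_mul ht (hε₁ i this) with h | h <;> rw [h] <;> simpa [IdxHat] using this
    · intro h k hk
      obtain ⟨i, hi, t, ht, rfl⟩ := hat_cases d ε₁ hε₁ k hk
      exact (main i hi t ht).2 (h i hi t ht)
  rw [key]
  have c3 : ∀ i ∈ Set.Icc (1:ℤ) d,
      Int.sign (σ (σbi i)) * ε₁ (σbi i) * ε₂ i = e (σbi i) := by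
    intro i hi
    rw [he, (hσbi i hi).2]
  have p1 : ∀ (y : Equiv.Perm ℤ) (i : ℤ), pApp y 1 i = y i := by simp [pApp]
  have pn : ∀ (y : Equiv.Perm ℤ) (i : ℤ), pApp y (-1) i = y.symm i := by simp [pApp]
  constructor
  · intro h i hi
    have hy := hy₂.mapsTo hi
    rw [c3 i hi, c3 _ hy, ← he]
    constructor
    · have hb := hB i hi
      have := h _ hb _ (hepm _ hb)
      rw [pm_self (hepm _ hb), p1, (hσbi i hi).2] at this
      rw [← this.1, (hσbi _ (pApp_mem d y₁ hy₁ _ _ hb)).1, this.2]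
      exact pm_self (hepm _ hb)
    · have := (h i hi _ (hepm i hi)).1
      rw [pm_self (hepm i hi), p1] at this
      exact this.symm
  · intro h
    have h4 : ∀ i ∈ Set.Icc (1:ℤ) d, y₂ (|σ i|) = |σ (pApp y₁ (e i) i)| := by
      intro i hi
      rw [he]; exact (h i hi).2
    have h3 : ∀ i ∈ Set.Icc (1:ℤ) d, e (pApp y₁ (e i) i) = e i := by
      intro i hi
      have h5 := (h _ (hA i hi)).1
      have hP := pApp_mem d y₁ hy₁ (e i) i hi
      rw [c3 _ (hA i hi), c3 _ (hy₂.mapsTo (hA i hi)), h4 i hi, (hσbi i hi).1,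
        (hσbi _ hP).1] at h5
      rcases hepm i hi with h6 | h6 <;> rw [h6] at h5 ⊢ <;> omega
    intro i hi t ht
    by_cases hte : t = e i
    · rw [hte, pm_self (hepm i hi), p1]
      exact ⟨(h4 i hi).symm, h3 i hi⟩
    · have ht' : t = - e i := by
        have := hepm i hi
        omega
      have hneg : t * e i = -1 := by rw [ht']; linear_combination -pm_self (hepm i hi)
      rw [hneg, pn]
      have hz : y₂.symm (|σ i|) ∈ Set.Icc (1:ℤ) d := by
        rw [← pn]; exact pApp_mem d y₂ hy₂ _ _ (hA i hi)
      obtain ⟨m, hm⟩ : ∃ m, m = σbi (y₂.symm (|σ i|)) := ⟨_, rfl⟩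
      have hmI : m ∈ Set.Icc (1:ℤ) d := hm ▸ hB _ hz
      have hms : |σ m| = y₂.symm (|σ i|) := hm ▸ (hσbi _ hz).2
      have h5 := h4 m hmI
      rw [hms, Equiv.apply_symm_apply] at h5
      have h6 := hinj _ hi _ (pApp_mem d y₁ hy₁ _ _ hmI) h5
      have h7 := h3 m hmI
      rw [← h6] at h7
      have h8 : pApp y₁ t i = m := by
        rw [ht', h7]
        rcases hepm m hmI with h9 | h9 <;> rw [h9] at h6 ⊢
        · rw [pn, h6, p1]; simp
        · rw [neg_neg, p1, h6, pn]; simp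
      rw [h8]
      exact ⟨hms, h7.symm⟩
end
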